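/- Let w : Fin n → ℚ and w' : Fin n' → ℚ be nondecreasing weight vectors, constant on subsets S ⊆ Fin n and S' ⊆ Fin n' respectively, and suppose (w, S) ≺ (w', S'). If there exists a set T₁ ⊆ S with |T₁| ≥ 3 and ∑_{i ∈ T₁} w i = 1 (a witness with T₂ = ∅ for the failure of condition (T) for (w, S)), then there exists T₁' ⊆ S' with |T₁'| ≥ 3 and ∑_{i ∈ T₁'} w' i = 1; in particular, condition (T) also fails for (w', S'). -/

import Mathlib

/-- A weight vector: positive entries summing to 2. -/
def IsWeightVector {n : ℕ} (w : Fin n → ℚ) : Prop :=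
  (∀ i, 0 < w i) ∧ ∑ i, w i = 2

/-- Condition INT of Deligne–Mostow. -/
def CondINT {n : ℕ} (w : Fin n → ℚ) : Prop :=
  ∀ i j : Fin n, i ≠ j → w i + w j < 1 → ∃ m : ℤ, (1 - w i - w j)⁻¹ = (m : ℚ)

/-- Condition ΣINT of Mostow for a subset `S`. -/
def CondSigmaINT {n : ℕ} (w : Fin n → ℚ) (S : Finset (Fin n)) : Prop :=
  (∀ i ∈ S, ∀ j ∈ S, w i = w j) ∧
  ∀ i j : Fin n, i ≠ j → w i + w j < 1 →
    ((i ∉ S ∨ j ∉ S) → ∃ m : ℤ, (1 - w i - w j)⁻¹ = (m : ℚ)) ∧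
    (i ∈ S → j ∈ S → ∃ m : ℤ, (1 - w i - w j)⁻¹ = (m : ℚ) / 2)

/-- Condition (T): there is no `T₁ ⊆ S`, `T₂ ⊆ Sᶜ` with `|T₁| ≥ 3` whose total weight is 1. -/
def CondT {n : ℕ} (w : Fin n → ℚ) (S : Finset (Fin n)) : Prop :=
  ¬ ∃ T₁ T₂ : Finset (Fin n), T₁ ⊆ S ∧ T₂ ⊆ Sᶜ ∧ 3 ≤ T₁.card ∧
      (∑ i ∈ T₁, w i) + (∑ i ∈ T₂, w i) = 1

/-- The partial order `(w, S) ≺ (w', S')` on Deligne–Mostow pairs. -/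
def Prec {n n' : ℕ} (w : Fin n → ℚ) (S : Finset (Fin n))
    (w' : Fin n' → ℚ) (S' : Finset (Fin n')) : Prop :=
  ∃ h : n ≤ n', (∀ i : Fin n, w' (Fin.castLE h i) ≤ w i) ∧
    S.card = S'.card ∧ ∀ i ∈ S, ∀ j ∈ S', w i = w' j

/-- Reduction method: if `(w, S) ≺ (w', S')` and condition (T) fails for `(w, S)` with a
witness `T₁ ⊆ S` (and `T₂ = ∅`), then it also fails for `(w', S')`. -/
theorem not_condT_of_prec {n n' : ℕ} (w : Fin n → ℚ) (w' : Fin n' → ℚ)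
    (hw : IsWeightVector w) (hw' : IsWeightVector w')
    (hmono : Monotone w) (hmono' : Monotone w')
    (S : Finset (Fin n)) (S' : Finset (Fin n'))
    (hconst : ∀ i ∈ S, ∀ j ∈ S, w i = w j)
    (hconst' : ∀ i ∈ S', ∀ j ∈ S', w' i = w' j)
    (hprec : Prec w S w' S')
    (h : ∃ T₁ ⊆ S, 3 ≤ T₁.card ∧ ∑ i ∈ T₁, w i = 1) :
    (∃ T₁' ⊆ S', 3 ≤ T₁'.card ∧ ∑ i ∈ T₁', w' i = 1) ∧ ¬ CondT w' S' := by
  have hwitness : ∃ T₁' ⊆ S', 3 ≤ T₁'.card ∧ ∑ i ∈ T₁', w' i = 1 := by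
    obtain ⟨_, _, hcard, hval⟩ := hprec
    obtain ⟨T, hTS, hT, hsum⟩ := h
    obtain ⟨T', hT'S', hT'⟩ :=
      Finset.exists_subset_card_eq (hcard ▸ Finset.card_le_card hTS : T.card ≤ S'.card)
    refine ⟨T', hT'S', hT' ▸ hT, ?_⟩
    obtain ⟨i, hi⟩ : T.Nonempty := Finset.card_pos.mp (by omega)
    rw [Finset.sum_eq_card_nsmul fun j hj => hconst j (hTS hj) i (hTS hi)] at hsum
    rw [Finset.sum_eq_card_nsmul fun j hj => (hval i (hTS hi) j (hT'S' hj)).symm, hT', hsum]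
  refine ⟨hwitness, fun hT => hT ?_⟩
  obtain ⟨T', hT'S', hcard, hsum⟩ := hwitness
  exact ⟨T', ∅, hT'S', Finset.empty_subset _, hcard, by simpa using hsum⟩
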